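/- Let N ≥ 2, μ₁ ∈ ℝ and μ₂ > -(N-2-μ₁)²/4. Set τ₊ = ((2-N+μ₁) + √((2-N+μ₁)² + 4μ₂))/2 and τ₋ = ((2-N+μ₁) - √((2-N+μ₁)² + 4μ₂))/2. Then for every ξ ∈ C²_c(ℝ^N) one has ∫_{ℝ^N} |x|^{τ₋} · ( -Δξ(x) + (μ₁ - 2τ₊)|x|^{-2} x·∇ξ(x) ) · |x|^{τ₊-μ₁} dx = √((2-N+μ₁)² + 4μ₂) · |𝕊^{N-1}| · ξ(0), where |𝕊^{N-1}| is the surface measure of the unit sphere in ℝ^N. -/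

import Mathlib

/-!
On a `d`-dimensional Euclidean space put `τ₊ + τ₋ = 2 - d + μ₁`. The product of the two weights is
then `|x|^(2-d)` and the drift coefficient is `μ₁ - 2τ₊ = d - 2 - (τ₊ - τ₋)`, so the integral is

`-∫ |x|^(2-d) Δξ + (d - 2) ∫ |x|^(-d) x·∇ξ - (τ₊ - τ₋) ∫ |x|^(-d) x·∇ξ`.

Integrating by parts once, with `|x|^(2-d)` regularised to `(|x|² + ε)^((2-d)/2)`, shows that the
first two terms cancel. In polar coordinates the last integral is the integral of `∂ᵣξ` along each
ray from the origin, that is `-|𝕊^(d-1)| ξ(0)`.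
-/

open MeasureTheory Filter Metric Set Topology

noncomputable section

/-- Euclidean space `ℝ^N`. -/
abbrev E (N : ℕ) := EuclideanSpace ℝ (Fin N)

/-- The Laplacian, as the sum of second derivatives in the coordinate directions. -/
def lap (N : ℕ) (u : E N → ℝ) (x : E N) : ℝ :=
  ∑ i, fderiv ℝ (fun y => fderiv ℝ u y (EuclideanSpace.single i 1)) x (EuclideanSpace.single i 1)

/-- The CKN operator `ℒ_{μ₁,μ₂} u = -Δu + μ₁|x|⁻² x·∇u + μ₂|x|⁻² u`. -/
def ckn (N : ℕ) (μ₁ μ₂ : ℝ) (u : E N → ℝ) (x : E N) : ℝ :=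
  -lap N u x + μ₁ / ‖x‖ ^ 2 * fderiv ℝ u x x + μ₂ / ‖x‖ ^ 2 * u x

/-- `τ₊(μ₁,μ₂)`. -/
def tauPlus (N : ℕ) (μ₁ μ₂ : ℝ) : ℝ :=
  ((2 - (N : ℝ) + μ₁) + Real.sqrt ((2 - (N : ℝ) + μ₁) ^ 2 + 4 * μ₂)) / 2

/-- `τ₋(μ₁,μ₂)`. -/
def tauMinus (N : ℕ) (μ₁ μ₂ : ℝ) : ℝ :=
  ((2 - (N : ℝ) + μ₁) - Real.sqrt ((2 - (N : ℝ) + μ₁) ^ 2 + 4 * μ₂)) / 2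

/-- Surface measure of the unit sphere `𝕊^{N-1}` in `ℝ^N`. -/
def sphereArea (N : ℕ) : ℝ := N * (volume (ball (0 : E N) 1)).toReal

/-- Local β-Hölder continuity of `f` on a set `s`. -/
def LocHolderOn (N : ℕ) (β : ℝ) (f : E N → ℝ) (s : Set (E N)) : Prop :=
  ∀ x ∈ s, ∃ t ∈ nhdsWithin x s, ∃ C : NNReal, HolderOnWith C β.toNNReal f t

section PolarCoordinates

open Module

variable {V F : Type*} [NormedAddCommGroup V] [NormedSpace ℝ V] [NormedAddCommGroup F]
  [NormedSpace ℝ F]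

lemma integral_volumeIoiPow (n : ℕ) (f : ℝ → F) :
    ∫ r, f r ∂Measure.volumeIoiPow n = ∫ r in Ioi (0 : ℝ), r ^ n • f r := by
  simp only [Measure.volumeIoiPow, ENNReal.ofReal]
  rw [integral_withDensity_eq_integral_smul (measurable_subtype_coe.pow_const _).real_toNNReal,
    integral_subtype_comap measurableSet_Ioi fun r : ℝ ↦ Real.toNNReal (r ^ n) • f r]
  refine setIntegral_congr_fun measurableSet_Ioi fun r hr ↦ ?_
  simp only [NNReal.smul_def, Real.coe_toNNReal _ (pow_nonneg (mem_Ioi.1 hr).le n)]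

lemma integral_Ioi_fderiv_smul [CompleteSpace F] {ξ : V → F} (hξ : ContDiff ℝ 1 ξ)
    (hξc : HasCompactSupport ξ) {v : V} (hv : v ≠ 0) :
    ∫ r in Ioi (0 : ℝ), fderiv ℝ ξ (r • v) v = -ξ 0 := by
  have hderiv (r : ℝ) : HasDerivAt (fun r : ℝ ↦ ξ (r • v)) (fderiv ℝ ξ (r • v) v) r := by
    have hline : HasDerivAt (fun r : ℝ ↦ r • v) v r := by
      simpa only [one_smul] using (hasDerivAt_id' r).smul_const v
    exact (hξ.differentiable one_ne_zero (r • v)).hasFDerivAt.comp_hasDerivAt r hline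
  have hsmooth : ContDiff ℝ 1 fun r : ℝ ↦ ξ (r • v) := hξ.comp (contDiff_id.smul contDiff_const)
  have hsupp : HasCompactSupport fun r : ℝ ↦ ξ (r • v) :=
    hξc.comp_isClosedEmbedding (isClosedEmbedding_smul_left hv)
  simpa only [(hderiv _).deriv, zero_smul] using hsupp.integral_Ioi_deriv_eq hsmooth 0

variable [FiniteDimensional ℝ V] [Nontrivial V] [MeasurableSpace V] [BorelSpace V]
  {μ : Measure V} [μ.IsAddHaarMeasure]

lemma integral_eq_integral_toSphere_integral_Ioi {f : V → F} (hf : Integrable f μ) :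
    ∫ x, f x ∂μ =
      ∫ s : sphere (0 : V) 1, (∫ r in Ioi (0 : ℝ), r ^ (finrank ℝ V - 1) • f (r • s.1))
        ∂μ.toSphere := by
  let Φ : sphere (0 : V) 1 × Ioi (0 : ℝ) → F := fun q ↦ f (q.2.1 • q.1.1)
  have hΦ : (fun x ↦ Φ (homeomorphUnitSphereProd V x)) = fun x : ({0}ᶜ : Set V) ↦ f x := by
    ext x
    have hx : ‖x.1‖ ≠ 0 := norm_ne_zero_iff.2 x.2
    simp [Φ, smul_smul, hx]
  have hmp := μ.measurePreserving_homeomorphUnitSphereProd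
  have hemb := (homeomorphUnitSphereProd V).measurableEmbedding
  have hΦint : Integrable Φ (μ.toSphere.prod (.volumeIoiPow (finrank ℝ V - 1))) := by
    rw [← hmp.integrable_comp_emb hemb, Function.comp_def, hΦ]
    exact (integrableOn_iff_comap_subtypeVal (measurableSet_singleton 0).compl).1 hf.integrableOn
  calc ∫ x, f x ∂μ
      = ∫ x : ({0}ᶜ : Set V), f x ∂μ.comap (↑) := by
        rw [integral_subtype_comap (measurableSet_singleton _).compl f, restrict_compl_singleton]
    _ = ∫ q, Φ q ∂μ.toSphere.prod (.volumeIoiPow (finrank ℝ V - 1)) := by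
        rw [← hmp.integral_comp hemb, hΦ]
    _ = _ := by
        rw [integral_prod _ hΦint]
        exact integral_congr_ae <| .of_forall fun s ↦
          integral_volumeIoiPow _ fun r ↦ f (r • s.1)

lemma locallyIntegrable_norm_rpow {q : ℝ} (hq : -(finrank ℝ V : ℝ) < q) :
    LocallyIntegrable (fun x : V ↦ ‖x‖ ^ q) μ := by
  refine locallyIntegrable_of_norm_le_rpow (C := 1) (α := -q) finrank_pos (by linarith)
    (.of_forall fun x ↦ ?_) (measurable_norm.pow_const q).aestronglyMeasurable
  rw [neg_neg, one_mul, Real.norm_of_nonneg (by positivity)]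

lemma integrable_norm_rpow_smul_apply_self {q : ℝ} (hq : -(finrank ℝ V : ℝ) < q + 1)
    {T : V → V →L[ℝ] F} (hT : Continuous T) (hTc : HasCompactSupport T) :
    Integrable (fun x ↦ ‖x‖ ^ q • T x x) μ := by
  have hbound : Integrable (fun x : V ↦ ‖x‖ ^ (q + 1) • ‖T x‖) μ :=
    (locallyIntegrable_norm_rpow hq).integrable_smul_right_of_hasCompactSupport hT.norm hTc.norm
  refine hbound.mono' ((measurable_norm.pow_const q).aestronglyMeasurable.smul
    (hT.clm_apply continuous_id).aestronglyMeasurable) ?_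
  filter_upwards [Measure.ae_ne μ 0] with x hx
  have hx : 0 < ‖x‖ := norm_pos_iff.2 hx
  calc ‖‖x‖ ^ q • T x x‖ = ‖x‖ ^ q * ‖T x x‖ := by
        rw [norm_smul, Real.norm_of_nonneg (by positivity)]
    _ ≤ ‖x‖ ^ q * (‖T x‖ * ‖x‖) := by gcongr; exact (T x).le_opNorm x
    _ = ‖x‖ ^ (q + 1) • ‖T x‖ := by rw [Real.rpow_add_one hx.ne', smul_eq_mul]; ring

lemma integral_norm_rpow_neg_finrank_smul_fderiv_apply_self [CompleteSpace F] {ξ : V → F}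
    (hξ : ContDiff ℝ 1 ξ) (hξc : HasCompactSupport ξ) :
    ∫ x, ‖x‖ ^ (-(finrank ℝ V : ℝ)) • fderiv ℝ ξ x x ∂μ = -(μ.toSphere.real univ • ξ 0) := by
  have hslice (s : sphere (0 : V) 1) :
      ∫ r in Ioi (0 : ℝ), r ^ (finrank ℝ V - 1) •
        ‖r • s.1‖ ^ (-(finrank ℝ V : ℝ)) • fderiv ℝ ξ (r • s.1) (r • s.1) = -ξ 0 := by
    rw [← integral_Ioi_fderiv_smul hξ hξc (ne_zero_of_mem_unit_sphere s)]
    refine setIntegral_congr_fun measurableSet_Ioi fun r (hr : 0 < r) ↦ ?_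
    have hweight : r ^ (finrank ℝ V - 1) * (r ^ (-(finrank ℝ V : ℝ)) * r) = 1 := by
      rw [Real.rpow_neg hr.le, Real.rpow_natCast, mul_left_comm,
        pow_sub_one_mul finrank_pos.ne', inv_mul_cancel₀ (by positivity)]
    simp only [norm_smul, norm_eq_of_mem_sphere, mul_one, Real.norm_of_nonneg hr.le, map_smul,
      smul_smul, hweight, one_smul]
  rw [integral_eq_integral_toSphere_integral_Ioi (integrable_norm_rpow_smul_apply_self
    (by linarith) (hξ.continuous_fderiv one_ne_zero) (hξc.fderiv (𝕜 := ℝ)))]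
  simp only [hslice, integral_const, smul_neg]

end PolarCoordinates

section Regularization

variable {V F : Type*} [NormedAddCommGroup V] [NormedAddCommGroup F] [NormedSpace ℝ F]

lemma continuous_norm_sq_add_rpow {ε : ℝ} (hε : 0 < ε) (s : ℝ) :
    Continuous fun x : V ↦ (‖x‖ ^ 2 + ε) ^ s :=
  Continuous.rpow_const (by fun_prop) fun _ ↦ .inl (by positivity)

variable [MeasurableSpace V] [BorelSpace V] {μ : Measure V} [NullSingletonClass μ]
  [IsFiniteMeasureOnCompacts μ]

lemma tendsto_integral_norm_sq_add_rpow_smul {q : ℝ} {h : V → F} (hh : Continuous h)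
    (hhc : HasCompactSupport h) (hint : Integrable (fun x ↦ ‖x‖ ^ q • h x) μ) :
    Tendsto (fun ε : ℝ ↦ ∫ x, (‖x‖ ^ 2 + ε) ^ (q / 2) • h x ∂μ) (𝓝[>] 0)
      (𝓝 (∫ x, ‖x‖ ^ q • h x ∂μ)) := by
  have hsq (x : V) : ‖x‖ ^ q = (‖x‖ ^ 2) ^ (q / 2) := by
    rw [← Real.rpow_natCast_mul (norm_nonneg x), Nat.cast_ofNat, mul_div_cancel₀ q two_ne_zero]
  have hint_one : Integrable (fun x ↦ (‖x‖ ^ 2 + 1) ^ (q / 2) • h x) μ :=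
    ((continuous_norm_sq_add_rpow one_pos _).smul hh).integrable_of_hasCompactSupport hhc.smul_left
  refine tendsto_integral_filter_of_dominated_convergence _ ?_ ?_
    (hint.norm.add hint_one.norm) ?_
  · exact .of_forall fun ε ↦ (((measurable_norm.pow_const 2).add_const ε).pow_const
      _).aestronglyMeasurable.smul (hh.integrable_of_hasCompactSupport
      hhc).aestronglyMeasurable
  · filter_upwards [Ioo_mem_nhdsGT one_pos] with ε ⟨hε₀, hε₁⟩
    filter_upwards [Measure.ae_ne μ 0] with x hx
    have hx : 0 < ‖x‖ := norm_pos_iff.2 hx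
    -- `t ↦ t ^ (q / 2)` is monotone or antitone according to the sign of `q`.
    have hweight : (‖x‖ ^ 2 + ε) ^ (q / 2) ≤ ‖x‖ ^ q + (‖x‖ ^ 2 + 1) ^ (q / 2) := by
      rw [hsq]
      rcases le_total 0 q with hq | hq
      · exact (Real.rpow_le_rpow (by positivity) (by linarith) (by linarith)).trans
          (le_add_of_nonneg_left (by positivity))
      · exact (Real.rpow_le_rpow_of_nonpos (pow_pos hx 2) (by linarith) (by linarith)).trans
          (le_add_of_nonneg_right (by positivity))
    simp only [Pi.add_apply, norm_smul]
    rw [Real.norm_of_nonneg (by positivity), Real.norm_of_nonneg (by positivity),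
      Real.norm_of_nonneg (by positivity), ← add_mul]
    gcongr
  · filter_upwards [Measure.ae_ne μ 0] with x hx
    have hx : 0 < ‖x‖ := norm_pos_iff.2 hx
    have hbase : Tendsto (fun ε : ℝ ↦ ‖x‖ ^ 2 + ε) (𝓝[>] 0) (𝓝 (‖x‖ ^ 2)) :=
      tendsto_nhdsWithin_of_tendsto_nhds <| by
        simpa only [add_zero] using (continuous_const_add (‖x‖ ^ 2)).tendsto 0
    rw [hsq]
    exact (hbase.rpow_const (.inl (pow_pos hx 2).ne')).smul_const _

end Regularization

section IntegrationByParts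

open Module InnerProductSpace

open scoped RealInnerProductSpace

variable {V F : Type*} [NormedAddCommGroup V] [InnerProductSpace ℝ V] [NormedAddCommGroup F]
  [NormedSpace ℝ F]

lemma hasFDerivAt_norm_sq_add_rpow {ε : ℝ} (hε : 0 < ε) (s : ℝ) (x : V) :
    HasFDerivAt (fun x : V ↦ (‖x‖ ^ 2 + ε) ^ s)
      ((s * (‖x‖ ^ 2 + ε) ^ (s - 1)) • 2 • innerSL ℝ x) x :=
  ((hasStrictFDerivAt_norm_sq x).hasFDerivAt.add_const ε).rpow_const (.inl (by positivity))

variable [FiniteDimensional ℝ V] [MeasurableSpace V] [BorelSpace V] {μ : Measure V}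
  [μ.IsAddHaarMeasure]

lemma integral_norm_sq_add_rpow_smul_fderiv {ε : ℝ} (hε : 0 < ε) (s : ℝ) {g : V → F}
    (hg : ContDiff ℝ 1 g) (hgc : HasCompactSupport g) (v : V) :
    ∫ x, (‖x‖ ^ 2 + ε) ^ s • fderiv ℝ g x v ∂μ =
      (-2 * s) • ∫ x, (‖x‖ ^ 2 + ε) ^ (s - 1) • ⟪v, x⟫ • g x ∂μ := by
  have hcont := continuous_norm_sq_add_rpow (V := V) hε
  have hderiv := hasFDerivAt_norm_sq_add_rpow (V := V) hε s
  have hgrad (x : V) : fderiv ℝ (fun x : V ↦ (‖x‖ ^ 2 + ε) ^ s) x v • g x =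
      (2 * s) • (‖x‖ ^ 2 + ε) ^ (s - 1) • ⟪v, x⟫ • g x := by
    rw [(hderiv x).fderiv, smul_smul, smul_smul]
    congr 1
    simp only [smul_apply, innerSL_apply_apply, nsmul_eq_mul, smul_eq_mul,
      Nat.cast_ofNat, real_inner_comm]
    ring
  rw [integral_smul_fderiv_eq_neg_fderiv_smul_of_integrable]
  · simp only [hgrad, integral_smul, neg_mul, neg_smul]
  · simp only [hgrad]
    exact (((hcont _).smul ((continuous_const.inner continuous_id).smul hg.continuous)
      ).integrable_of_hasCompactSupport hgc.smul_left.smul_left).smul _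
  · exact ((hcont s).smul ((hg.continuous_fderiv one_ne_zero).clm_apply continuous_const)
      ).integrable_of_hasCompactSupport (hgc.fderiv_apply (𝕜 := ℝ) v).smul_left
  · exact ((hcont s).smul hg.continuous).integrable_of_hasCompactSupport hgc.smul_left
  · exact fun x _ ↦ (hderiv x).differentiableAt
  · exact fun x _ ↦ hg.differentiable one_ne_zero x

variable [Nontrivial V]

lemma integrable_norm_rpow_smul_inner_smul {q : ℝ} (hq : -(finrank ℝ V : ℝ) < q + 1) {g : V → F}
    (hg : Continuous g) (hgc : HasCompactSupport g) (v : V) :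
    Integrable (fun x ↦ ‖x‖ ^ q • ⟪v, x⟫ • g x) μ :=
  integrable_norm_rpow_smul_apply_self (T := fun x ↦ (innerSL ℝ v).smulRight (g x)) hq
    (((ContinuousLinearMap.smulRightL ℝ V F (innerSL ℝ v)).continuous).comp hg)
    (hgc.comp_left (map_zero (ContinuousLinearMap.smulRightL ℝ V F (innerSL ℝ v))))

lemma integral_norm_rpow_smul_fderiv {q : ℝ} (hq : 1 - (finrank ℝ V : ℝ) < q) {g : V → F}
    (hg : ContDiff ℝ 1 g) (hgc : HasCompactSupport g) (v : V) :
    ∫ x, ‖x‖ ^ q • fderiv ℝ g x v ∂μ = -q • ∫ x, ‖x‖ ^ (q - 2) • ⟪v, x⟫ • g x ∂μ := by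
  have hderiv : Continuous fun x ↦ fderiv ℝ g x v :=
    (hg.continuous_fderiv one_ne_zero).clm_apply continuous_const
  have hderivc : HasCompactSupport fun x ↦ fderiv ℝ g x v := hgc.fderiv_apply (𝕜 := ℝ) v
  have hlim_left := tendsto_integral_norm_sq_add_rpow_smul hderiv hderivc
    ((locallyIntegrable_norm_rpow (μ := μ) (by linarith : -(finrank ℝ V : ℝ) < q)
      ).integrable_smul_right_of_hasCompactSupport hderiv hderivc)
  have hlim_right := (tendsto_integral_norm_sq_add_rpow_smul
    ((continuous_const.inner continuous_id).smul hg.continuous) hgc.smul_left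
    (integrable_norm_rpow_smul_inner_smul (μ := μ) (q := q - 2) (by linarith) hg.continuous hgc v)
    ).const_smul (-q)
  refine tendsto_nhds_unique hlim_left (hlim_right.congr' ?_)
  filter_upwards [self_mem_nhdsWithin] with ε hε
  rw [integral_norm_sq_add_rpow_smul_fderiv hε _ hg hgc, show q / 2 - 1 = (q - 2) / 2 by ring,
    show -2 * (q / 2) = -q by ring]
  rfl

end IntegrationByParts

section Laplacian

open Module InnerProductSpace Laplacian

open scoped RealInnerProductSpace

variable {V F ι : Type*} [NormedAddCommGroup V] [InnerProductSpace ℝ V]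
  [NormedAddCommGroup F] [NormedSpace ℝ F] [Fintype ι]

lemma apply_self_eq_sum_inner_smul (T : V →L[ℝ] F) (b : OrthonormalBasis ι ℝ V) (x : V) :
    T x = ∑ i, ⟪b i, x⟫ • T (b i) := by
  conv_lhs => rw [← b.sum_repr' x]
  simp only [map_sum, map_smul]

variable [FiniteDimensional ℝ V]

lemma laplacian_eq_sum_fderiv_fderiv {ξ : V → F} (hξ : ContDiff ℝ 2 ξ)
    (b : OrthonormalBasis ι ℝ V) (x : V) :
    Δ ξ x = ∑ i, fderiv ℝ (fun y ↦ fderiv ℝ ξ y (b i)) x (b i) := by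
  have hdiff : DifferentiableAt ℝ (fderiv ℝ ξ) x :=
    (hξ.fderiv_right (m := 1) le_rfl).differentiable one_ne_zero x
  rw [laplacian_eq_iteratedFDeriv_orthonormalBasis ξ b]
  refine Finset.sum_congr rfl fun i _ ↦ ?_
  simp [iteratedFDeriv_two_apply, fderiv_clm_apply hdiff (differentiableAt_const _)]

variable [MeasurableSpace V] [BorelSpace V] [Nontrivial V] {μ : Measure V} [μ.IsAddHaarMeasure]

lemma integrable_norm_rpow_smul_fderiv_fderiv {q : ℝ} (hq : -(finrank ℝ V : ℝ) < q) {ξ : V → F}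
    (hξ : ContDiff ℝ 2 ξ) (hξc : HasCompactSupport ξ) (v w : V) :
    Integrable (fun x ↦ ‖x‖ ^ q • fderiv ℝ (fun y ↦ fderiv ℝ ξ y v) x w) μ := by
  have hξ₁ : ContDiff ℝ 1 fun x ↦ fderiv ℝ ξ x v :=
    (hξ.fderiv_right le_rfl).clm_apply contDiff_const
  exact (locallyIntegrable_norm_rpow hq).integrable_smul_right_of_hasCompactSupport
    ((hξ₁.continuous_fderiv one_ne_zero).clm_apply continuous_const)
    ((hξc.fderiv_apply (𝕜 := ℝ) v).fderiv_apply (𝕜 := ℝ) w)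

lemma integrable_norm_rpow_smul_laplacian {q : ℝ} (hq : -(finrank ℝ V : ℝ) < q) {ξ : V → F}
    (hξ : ContDiff ℝ 2 ξ) (hξc : HasCompactSupport ξ) :
    Integrable (fun x ↦ ‖x‖ ^ q • Δ ξ x) μ := by
  let b := stdOrthonormalBasis ℝ V
  simp only [laplacian_eq_sum_fderiv_fderiv hξ b, Finset.smul_sum]
  exact integrable_finsetSum _ fun i _ ↦
    integrable_norm_rpow_smul_fderiv_fderiv hq hξ hξc (b i) (b i)

lemma integral_norm_rpow_smul_laplacian {q : ℝ} (hq : 1 - (finrank ℝ V : ℝ) < q) {ξ : V → F}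
    (hξ : ContDiff ℝ 2 ξ) (hξc : HasCompactSupport ξ) :
    ∫ x, ‖x‖ ^ q • Δ ξ x ∂μ = -q • ∫ x, ‖x‖ ^ (q - 2) • fderiv ℝ ξ x x ∂μ := by
  let b := stdOrthonormalBasis ℝ V
  have hξ₁ (v : V) : ContDiff ℝ 1 fun x ↦ fderiv ℝ ξ x v :=
    (hξ.fderiv_right le_rfl).clm_apply contDiff_const
  have hξ₁c (v : V) : HasCompactSupport fun x ↦ fderiv ℝ ξ x v := hξc.fderiv_apply (𝕜 := ℝ) v
  have hfirst (v : V) : Integrable (fun x ↦ ‖x‖ ^ (q - 2) • ⟪v, x⟫ • fderiv ℝ ξ x v) μ :=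
    integrable_norm_rpow_smul_inner_smul (by linarith) (hξ₁ v).continuous (hξ₁c v) v
  calc ∫ x, ‖x‖ ^ q • Δ ξ x ∂μ
      = ∑ i, ∫ x, ‖x‖ ^ q • fderiv ℝ (fun y ↦ fderiv ℝ ξ y (b i)) x (b i) ∂μ := by
        simp only [laplacian_eq_sum_fderiv_fderiv hξ b, Finset.smul_sum]
        exact integral_finsetSum _ fun i _ ↦
          integrable_norm_rpow_smul_fderiv_fderiv (by linarith) hξ hξc (b i) (b i)
    _ = ∑ i, -q • ∫ x, ‖x‖ ^ (q - 2) • ⟪b i, x⟫ • fderiv ℝ ξ x (b i) ∂μ :=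
        Finset.sum_congr rfl fun i _ ↦ integral_norm_rpow_smul_fderiv hq (hξ₁ _) (hξ₁c _) (b i)
    _ = -q • ∫ x, ‖x‖ ^ (q - 2) • fderiv ℝ ξ x x ∂μ := by
        simp only [fun x ↦ apply_self_eq_sum_inner_smul (fderiv ℝ ξ x) b x, Finset.smul_sum]
        rw [integral_finsetSum _ fun i _ ↦ hfirst (b i), Finset.smul_sum]

lemma lap_eq_laplacian {N : ℕ} {ξ : E N → ℝ} (hξ : ContDiff ℝ 2 ξ) (x : E N) :
    lap N ξ x = Δ ξ x := by
  simp only [lap, laplacian_eq_sum_fderiv_fderiv hξ (EuclideanSpace.basisFun (Fin N) ℝ),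
    EuclideanSpace.basisFun_apply]

end Laplacian

section FundamentalSolution

open Module Laplacian

lemma sphereArea_eq (N : ℕ) : sphereArea N = (volume : Measure (E N)).toSphere.real univ := by
  simp [sphereArea, measureReal_def]

lemma tauPlus_add_tauMinus (N : ℕ) (μ₁ μ₂ : ℝ) :
    tauPlus N μ₁ μ₂ + tauMinus N μ₁ μ₂ = 2 - N + μ₁ := by
  unfold tauPlus tauMinus
  ring

lemma tauPlus_sub_tauMinus (N : ℕ) (μ₁ μ₂ : ℝ) :
    tauPlus N μ₁ μ₂ - tauMinus N μ₁ μ₂ = √((2 - (N : ℝ) + μ₁) ^ 2 + 4 * μ₂) := by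
  unfold tauPlus tauMinus
  ring

variable {V F : Type*} [NormedAddCommGroup V] [InnerProductSpace ℝ V] [FiniteDimensional ℝ V]
  [Nontrivial V] [MeasurableSpace V] [BorelSpace V] [NormedAddCommGroup F] [NormedSpace ℝ F]
  {μ : Measure V} [μ.IsAddHaarMeasure]

lemma rpow_mul_rpow_smul_neg_add {r d m σ τ : ℝ} (hr : 0 < r) (hsum : σ + τ = 2 - d + m)
    (a b : F) :
    (r ^ τ * r ^ (σ - m)) • (-a + ((m - 2 * σ) / r ^ 2) • b) =
      (m - 2 * σ) • r ^ (-d) • b - r ^ (2 - d) • a := by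
  have hweight : r ^ τ * r ^ (σ - m) = r ^ (2 - d) := by
    rw [← Real.rpow_add hr]
    congr 1
    linarith
  have hdrift : r ^ (2 - d) * ((m - 2 * σ) / r ^ 2) = (m - 2 * σ) * r ^ (-d) := by
    rw [sub_eq_add_neg, Real.rpow_add hr, Real.rpow_ofNat]
    field_simp
  rw [hweight, smul_add, smul_neg, smul_smul, hdrift, mul_smul, neg_add_eq_sub]

/-- By Vieta, `hsum` says that `σ` and `τ` are the two roots of the indicial equation
`t² - (2 - d + m) t - μ₂ = 0` with `d = finrank ℝ V` and `μ₂ = -στ`. -/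
theorem stmt0_general [CompleteSpace F] {m σ τ : ℝ} (hsum : σ + τ = 2 - finrank ℝ V + m)
    {ξ : V → F} (hξ : ContDiff ℝ 2 ξ) (hξc : HasCompactSupport ξ) :
    ∫ x, (‖x‖ ^ τ * ‖x‖ ^ (σ - m)) • (-Δ ξ x + ((m - 2 * σ) / ‖x‖ ^ 2) • fderiv ℝ ξ x x) ∂μ =
      ((σ - τ) * μ.toSphere.real univ) • ξ 0 := by
  set d : ℝ := (finrank ℝ V : ℝ)
  have hradial : Integrable (fun x ↦ (m - 2 * σ) • ‖x‖ ^ (-d) • fderiv ℝ ξ x x) μ :=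
    (integrable_norm_rpow_smul_apply_self (by linarith) (hξ.continuous_fderiv two_ne_zero)
      (hξc.fderiv (𝕜 := ℝ))).smul _
  have hlaplacian : Integrable (fun x ↦ ‖x‖ ^ (2 - d) • Δ ξ x) μ :=
    integrable_norm_rpow_smul_laplacian (by linarith) hξ hξc
  calc ∫ x, (‖x‖ ^ τ * ‖x‖ ^ (σ - m)) • (-Δ ξ x + ((m - 2 * σ) / ‖x‖ ^ 2) • fderiv ℝ ξ x x) ∂μ
      = ∫ x, ((m - 2 * σ) • ‖x‖ ^ (-d) • fderiv ℝ ξ x x - ‖x‖ ^ (2 - d) • Δ ξ x) ∂μ :=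
        integral_congr_ae <| (Measure.ae_ne μ 0).mono fun x hx ↦
          rpow_mul_rpow_smul_neg_add (norm_pos_iff.2 hx) hsum (Δ ξ x) (fderiv ℝ ξ x x)
    _ = (m - 2 * σ) • ∫ x, ‖x‖ ^ (-d) • fderiv ℝ ξ x x ∂μ -
          -(2 - d) • ∫ x, ‖x‖ ^ (2 - d - 2) • fderiv ℝ ξ x x ∂μ := by
        rw [integral_sub hradial hlaplacian, integral_smul,
          integral_norm_rpow_smul_laplacian (by linarith) hξ hξc]
    _ = -(σ - τ) • ∫ x, ‖x‖ ^ (-d) • fderiv ℝ ξ x x ∂μ := by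
        rw [show 2 - d - 2 = -d by ring, ← sub_smul]
        congr 1
        linarith
    _ = ((σ - τ) * μ.toSphere.real univ) • ξ 0 := by
        rw [integral_norm_rpow_neg_finrank_smul_fderiv_apply_self (hξ.of_le one_le_two) hξc,
          smul_neg, neg_smul, neg_neg, mul_smul]

end FundamentalSolution

/-- weighted distributional identity for the fundamental solution
`Φ(x) = |x|^{τ₋}` in the non-critical case `μ₂ > -(N-2-μ₁)²/4`. -/
theorem stmt0 (N : ℕ) (hN : 2 ≤ N) (μ₁ μ₂ : ℝ)
    (hμ₂ : -((N : ℝ) - 2 - μ₁) ^ 2 / 4 < μ₂)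
    (ξ : E N → ℝ) (hξ : ContDiff ℝ 2 ξ) (hξc : HasCompactSupport ξ) :
    ∫ x : E N, ‖x‖ ^ tauMinus N μ₁ μ₂ *
        (-lap N ξ x + (μ₁ - 2 * tauPlus N μ₁ μ₂) / ‖x‖ ^ 2 * fderiv ℝ ξ x x) *
        ‖x‖ ^ (tauPlus N μ₁ μ₂ - μ₁) =
      Real.sqrt ((2 - (N : ℝ) + μ₁) ^ 2 + 4 * μ₂) * sphereArea N * ξ 0 := by
  have : NeZero N := ⟨by lia⟩
  have hsum : tauPlus N μ₁ μ₂ + tauMinus N μ₁ μ₂ = 2 - Module.finrank ℝ (E N) + μ₁ := by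
    rw [finrank_euclideanSpace_fin, tauPlus_add_tauMinus]
  simpa only [← lap_eq_laplacian hξ, ← sphereArea_eq, smul_eq_mul,
    tauPlus_sub_tauMinus, mul_right_comm] using stmt0_general (μ := volume) hsum hξ hξc
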